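/- Let σ : ℝ → ℝ be expressive, fix k ≥ 0, and let P be the first index with P ≥ k and Σ^{(P)}(0) ≠ 0 (so P ∈ {k, k+1}), where Σ is the Gaussian smoothing of σ. Let Σ_n := Σ_{1-k/n}, a_{ν,n} := Σ_n^{(ν)}(0)/ν!, and let w_1,…,w_k, b be i.i.d. N(0,1/n), x uniform on {±1}^k, G = Σ_{i=1}^k w_i x_i + b, M(x) = ∏_{i=1}^k x_i. Then, conditionally on any fixed signs τ = sign(w) and sign(b), Σ_{ν=0}^P a_{ν,n} · E[M(x)·G^ν] = C(P)·(−1)^{C'(τ, sign(b))}·n^{-P/2} + O(n^{-P/2 - 1/2}), where C(P) ≠ 0 is a constant independent of n and C'(τ, sign(b)) ∈ ℤ depends only on the signs; the O-bound is uniform over the signs. -/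

import Mathlib

open MeasureTheory ProbabilityTheory Filter Finset Asymptotics
open scoped NNReal ENNReal

noncomputable section

/-- The ±1 value encoded by a Boolean bit. -/
def bsign (b : Bool) : ℝ := if b then 1 else -1

/-- Expectation over a uniformly random point of the Boolean cube `{±1}^n`. -/
def bExp (n : ℕ) (g : (Fin n → Bool) → ℝ) : ℝ :=
  (∑ x : Fin n → Bool, g x) / 2 ^ n

/-- A function on the Boolean cube is Boolean(-valued) if it takes values in `{±1}`. -/
def IsBooleanFn {n : ℕ} (f : (Fin n → Bool) → ℝ) : Prop := ∀ x, f x = 1 ∨ f x = -1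

/-- Initialization distribution: the weights `w : ℝⁿ` and the bias `b` are
iid `N(0, 1/n)` Gaussians. -/
def initMeasure (n : ℕ) : Measure ((Fin n → ℝ) × ℝ) :=
  (Measure.pi fun _ : Fin n => gaussianReal 0 (n : ℝ≥0)⁻¹).prod (gaussianReal 0 (n : ℝ≥0)⁻¹)

/-- Initial alignment `INAL(f, σ) = E_{w,b} [ (E_x [f(x) σ(wᵀx + b)])² ]`. -/
def INAL (n : ℕ) (f : (Fin n → Bool) → ℝ) (σ : ℝ → ℝ) : ℝ :=
  ∫ θ : (Fin n → ℝ) × ℝ,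
    (bExp n fun x => f x * σ (∑ i, θ.1 i * bsign (x i) + θ.2)) ^ 2 ∂ initMeasure n

/-- The `v`-Gaussian smoothing `Σ_v(t) = E_{Y ∼ N(0,v)} [σ(Y + t)]`. -/
def gsmooth (σ : ℝ → ℝ) (v : ℝ) (t : ℝ) : ℝ :=
  ∫ y, σ (y + t) ∂ gaussianReal 0 v.toNNReal

/-- `σ` is polynomially bounded: `|σ(x)| ≤ C |x|^c + C` for some `C, c > 0`. -/
def PolyBounded (σ : ℝ → ℝ) : Prop :=
  ∃ C : ℝ, 0 < C ∧ ∃ c : ℕ, 0 < c ∧ ∀ x : ℝ, |σ x| ≤ C * |x| ^ c + C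

/-- `σ` is expressive: measurable, polynomially bounded, and its Gaussian smoothing has no
two consecutive vanishing derivatives at `0`. -/
def Expressive (σ : ℝ → ℝ) : Prop :=
  Measurable σ ∧ PolyBounded σ ∧
    ∀ m : ℕ, iteratedDeriv m (gsmooth σ 1) 0 ≠ 0 ∨ iteratedDeriv (m + 1) (gsmooth σ 1) 0 ≠ 0

/-- A nonnegative sequence is negligible if it decays faster than any inverse polynomial. -/
def Negligible (g : ℕ → ℝ) : Prop :=
  ∀ c : ℕ, Tendsto (fun n : ℕ => (n : ℝ) ^ c * g n) atTop (nhds 0)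

/-- Fourier character `M_S(x) = ∏_{i ∈ S} x_i`. -/
def chi {n : ℕ} (S : Finset (Fin n)) (x : Fin n → Bool) : ℝ := ∏ i ∈ S, bsign (x i)

/-- Fourier coefficient `f̂(S) = E_x [f(x) M_S(x)]`. -/
def fourierCoef (n : ℕ) (f : (Fin n → Bool) → ℝ) (S : Finset (Fin n)) : ℝ :=
  bExp n fun x => f x * chi S x

/-- Fourier weight up to degree `k`: `W^{≤k}(f)`. -/
def weightLE (n k : ℕ) (f : (Fin n → Bool) → ℝ) : ℝ :=
  ∑ S ∈ Finset.univ.filter (fun S : Finset (Fin n) => S.card ≤ k), fourierCoef n f S ^ 2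

/-- Fourier weight strictly below degree `k`: `W^{<k}(f)`. -/
def weightLT (n k : ℕ) (f : (Fin n → Bool) → ℝ) : ℝ :=
  ∑ S ∈ Finset.univ.filter (fun S : Finset (Fin n) => S.card < k), fourierCoef n f S ^ 2

/-- The monomial `M_k(x) = ∏_{i=1}^k x_i`, viewed as a function on `{±1}^n`. -/
def monomial (n k : ℕ) : (Fin n → Bool) → ℝ :=
  fun x => ∏ i ∈ Finset.univ.filter (fun i : Fin n => (i : ℕ) < k), bsign (x i)

/-- The `N`-extension of `f : {±1}^n → ℝ` (for `n ≤ N`): ignore the last `N - n` coordinates. -/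
def extendFn (n N : ℕ) (f : (Fin n → Bool) → ℝ) : (Fin N → Bool) → ℝ :=
  fun x => f fun i => if h : (i : ℕ) < N then x ⟨i, h⟩ else false

/-- Cross-predictability of (the uniform distribution on) the orbit of `f` under coordinate
permutations, with uniform inputs: `CP(orb(f), U^N)`. -/
def orbitCP (N : ℕ) (f : (Fin N → Bool) → ℝ) : ℝ :=
  (∑ π : Equiv.Perm (Fin N), ∑ π' : Equiv.Perm (Fin N),
      (bExp N fun x => f (fun i => x (π i)) * f (fun i => x (π' i))) ^ 2) /
    (Fintype.card (Equiv.Perm (Fin N))) ^ 2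

/-- `N = n^{1+ε}` (rounded up). -/
def Ndim (ε : ℝ) (n : ℕ) : ℕ := ⌈(n : ℝ) ^ (1 + ε)⌉₊

/-- The distribution of `(|w_1|, …, |w_k|, |b|)` is generated from `k + 1` iid `N(0, 1/n)`
variables (of which we take absolute values below). -/
def weightMeasure (n k : ℕ) : Measure ((Fin k → ℝ) × ℝ) :=
  (Measure.pi fun _ : Fin k => gaussianReal 0 (n : ℝ≥0)⁻¹).prod (gaussianReal 0 (n : ℝ≥0)⁻¹)

/-- `G = Σ_{i=1}^k τ_i |w_i| x_i + s |b|`, i.e. `Σ w_i x_i + b` conditioned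
on `sign(w_i) = τ_i` and `sign(b) = s`. -/
def Gval (k : ℕ) (τ : Fin k → ℝ) (s : ℝ) (g : (Fin k → ℝ) × ℝ) (x : Fin k → Bool) : ℝ :=
  ∑ i, τ i * |g.1 i| * bsign (x i) + s * |g.2|

/-- The conditional expectation `E[M_k(x) · F(G) | sign(w) = τ, sign(b) = s]`,
taken over `|w_1|, …, |w_k|, |b|` and uniform `x ∈ {±1}^k`. -/
def condExpFn (n k : ℕ) (τ : Fin k → ℝ) (s : ℝ) (F : ℝ → ℝ) : ℝ :=
  ∫ g : (Fin k → ℝ) × ℝ,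
    (bExp k fun x => (∏ i, bsign (x i)) * F (Gval k τ s g x)) ∂ weightMeasure n k

/-- The conditional moment `E[M_k(x) · G^ν | sign(w) = τ, sign(b) = s]`. -/
def condMoment (n k : ℕ) (τ : Fin k → ℝ) (s : ℝ) (ν : ℕ) : ℝ :=
  condExpFn n k τ s fun z => z ^ ν

/-- `s` is a sign. -/
def IsSign (s : ℝ) : Prop := s = 1 ∨ s = -1

/-- The degree-`P` Taylor remainder of the `v`-Gaussian smoothing `Σ_v` at `0`:
`R(z) = Σ_v(z) − Σ_{ν=0}^P Σ_v^{(ν)}(0)/ν! · z^ν`. -/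
def taylorRem (σ : ℝ → ℝ) (v : ℝ) (P : ℕ) (z : ℝ) : ℝ :=
  gsmooth σ v z -
    ∑ ν ∈ Finset.range (P + 1),
      iteratedDeriv ν (gsmooth σ v) 0 / (ν.factorial : ℝ) * z ^ ν

/-!
Averaging against `∏ xᵢ` over the cube is a `k`-fold central difference, which on polynomials of
degree at most `k + 1` coincides with `∏ cᵢ • dᵏ/dxᵏ`. Hence `E[M(x) G^ν]` vanishes for `ν < k`,
and for `ν ∈ {k, k + 1}` it equals `ν! (∏ τᵢ) s^(ν-k) (E|Y|)^ν n^(-ν/2)` with `Y ∼ N(0, 1)`.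

If the coefficients `Σ_{1-k/n}^{(ν)}(0)` were replaced by `Σ^{(ν)}(0)`, only the term `ν = P` would
survive, and it is exactly the claimed main term. Writing `Σ_v^{(ν)}` as an integral of `σ` against
a Hermite-type kernel shows that it is differentiable in `v`, so each replacement costs `O(1/n)`,
in total `O(n^(-k/2-1))`, which is `O(n^(-P/2-1/2))` because `P ≤ k + 1`.
-/

section CubeDifference

open Polynomial (derivative taylor)
open scoped Polynomial

lemma natDegree_taylor_sub_taylor_le {R : Type*} [CommRing R] (p : R[X]) (a b : R) :
    (taylor a p - taylor b p).natDegree ≤ p.natDegree - 1 := by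
  rw [Polynomial.natDegree_le_iff_coeff_eq_zero]
  intro N hN
  have hconst : (Polynomial.hasseDeriv N p).natDegree = 0 := by
    have := Polynomial.natDegree_hasseDeriv_le p N
    omega
  rw [Polynomial.coeff_sub, Polynomial.taylor_coeff, Polynomial.taylor_coeff,
    Polynomial.eq_C_of_natDegree_eq_zero hconst, Polynomial.eval_C, Polynomial.eval_C, sub_self]

lemma iterate_derivative_taylor {R : Type*} [CommSemiring R] (r : R) (k : ℕ) (p : R[X]) :
    derivative^[k] (taylor r p) = taylor r (derivative^[k] p) := by
  have hcomm : Function.Commute derivative (taylor r : R[X] → R[X]) := fun q => by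
    simp [Polynomial.taylor_apply, Polynomial.derivative_comp]
  exact hcomm.iterate_left k p

lemma eval_add_sub_eval_sub_of_natDegree_le_two {R : Type*} [CommRing R] {p : R[X]}
    (hp : p.natDegree ≤ 2) (x h : R) :
    p.eval (x + h) - p.eval (x - h) = 2 * h * p.derivative.eval x := by
  rw [p.as_sum_range_C_mul_X_pow' (Nat.lt_succ_of_le hp)]
  simp only [Finset.sum_range_succ, Finset.sum_range_zero, Polynomial.derivative_add,
    Polynomial.derivative_C_mul_X_pow, Polynomial.eval_add, Polynomial.eval_mul,
    Polynomial.eval_pow, Polynomial.eval_C, Polynomial.eval_X,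
    Polynomial.derivative_zero, Polynomial.eval_zero]
  push_cast
  ring

lemma bExp_succ (k : ℕ) (g : (Fin (k + 1) → Bool) → ℝ) :
    bExp (k + 1) g =
      (bExp k (fun x => g (Fin.cons true x)) + bExp k (fun x => g (Fin.cons false x))) / 2 := by
  have hsum : ∑ x, g x = ∑ y : Bool × (Fin k → Bool), g (Fin.cons y.1 y.2) :=
    ((Fin.consEquiv fun _ : Fin (k + 1) => Bool).sum_comp g).symm
  simp only [bExp, hsum, Fintype.sum_prod_type, Fintype.sum_bool]
  ring

lemma bExp_succ_prod_bsign_mul {k : ℕ} (c : Fin (k + 1) → ℝ) (d : ℝ) (F : ℝ → ℝ) :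
    (bExp (k + 1) fun x => (∏ i, bsign (x i)) * F (∑ i, c i * bsign (x i) + d)) =
      (bExp k fun x => (∏ i, bsign (x i)) *
        (F (∑ i, c i.succ * bsign (x i) + d + c 0) -
          F (∑ i, c i.succ * bsign (x i) + d - c 0))) / 2 := by
  rw [bExp_succ]
  simp only [bExp, ← add_div, ← Finset.sum_add_distrib]
  congr! 3 with x
  have htrue (y : ℝ) : c 0 * 1 + y + d = y + d + c 0 := by ring
  have hfalse (y : ℝ) : c 0 * -1 + y + d = y + d - c 0 := by ring
  simp only [Fin.prod_univ_succ, Fin.sum_univ_succ, Fin.cons_zero, Fin.cons_succ,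
    show bsign true = 1 from rfl, show bsign false = -1 from rfl, htrue, hfalse]
  ring

-- Averaging against `∏ xᵢ` composes `k` central differences, each of which agrees with `cᵢ • d/dx`
-- up to terms that lower the degree by at least three.
lemma bExp_prod_bsign_mul_eval {k : ℕ} (c : Fin k → ℝ) (d : ℝ) {p : ℝ[X]}
    (hp : p.natDegree ≤ k + 1) :
    (bExp k fun x => (∏ i, bsign (x i)) * p.eval (∑ i, c i * bsign (x i) + d)) =
      (∏ i, c i) * (derivative^[k] p).eval d := by
  induction k generalizing p with
  | zero => simp [bExp]
  | succ k ih =>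
    set q := taylor (c 0) p - taylor (-c 0) p with hq
    have hq_deg : q.natDegree ≤ k + 1 :=
      (natDegree_taylor_sub_taylor_le p _ _).trans (by omega)
    have hdeg : (derivative^[k] p).natDegree ≤ 2 :=
      (Polynomial.natDegree_iterate_derivative p k).trans (by omega)
    have hq_deriv : (derivative^[k] q).eval d = 2 * c 0 * (derivative^[k + 1] p).eval d := by
      rw [hq, Polynomial.iterate_derivative_sub, iterate_derivative_taylor,
        iterate_derivative_taylor, Polynomial.eval_sub, Polynomial.taylor_eval,
        Polynomial.taylor_eval, ← sub_eq_add_neg,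
        eval_add_sub_eval_sub_of_natDegree_le_two hdeg, Function.iterate_succ_apply']
    have hcube := bExp_succ_prod_bsign_mul c d fun z => p.eval z
    have hq_eval (z : ℝ) : p.eval (z + c 0) - p.eval (z - c 0) = q.eval z := by
      rw [hq, Polynomial.eval_sub, Polynomial.taylor_eval, Polynomial.taylor_eval, sub_eq_add_neg z]
    simp only [hq_eval] at hcube
    rw [hcube, ih (fun i => c i.succ) hq_deg, hq_deriv, Fin.prod_univ_succ]
    ring

end CubeDifference

section SignedMoments

open Polynomial (X derivative)
open scoped Polynomial Nat

/-- The first absolute moment `E|Y|` of `Y ∼ N(0, v)`, the mean of each `|wᵢ|` and of `|b|`. -/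
def gaussianAbsMoment (v : ℝ≥0) : ℝ := ∫ y, |y| ∂gaussianReal 0 v

lemma integrable_abs_gaussianReal (v : ℝ≥0) : Integrable (fun y : ℝ => |y|) (gaussianReal 0 v) :=
  ((memLp_id_gaussianReal 1).integrable le_rfl).abs

lemma gaussianAbsMoment_eq_sqrt_mul (v : ℝ≥0) :
    gaussianAbsMoment v = √v * gaussianAbsMoment 1 := by
  have hmap : (gaussianReal 0 1).map (√v * ·) = gaussianReal 0 v := by
    rw [gaussianReal_map_const_mul, mul_zero, mul_one]
    congr
    exact Real.sq_sqrt v.coe_nonneg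
  rw [gaussianAbsMoment, gaussianAbsMoment, ← hmap, integral_map (by fun_prop) (by fun_prop),
    ← integral_const_mul]
  simp only [abs_mul, abs_of_nonneg (Real.sqrt_nonneg _)]

lemma gaussianAbsMoment_pos {v : ℝ≥0} (hv : v ≠ 0) : 0 < gaussianAbsMoment v := by
  have := nullSingletonClass_gaussianReal (μ := 0) hv
  have hsupp : Function.support (fun y : ℝ => |y|) = {0}ᶜ := by ext; simp
  rw [gaussianAbsMoment, integral_pos_iff_support_of_nonneg (fun y => abs_nonneg y)
    (integrable_abs_gaussianReal v), hsupp, prob_compl_eq_one_sub (measurableSet_singleton 0),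
    measure_singleton]
  simp

lemma gaussianAbsMoment_inv_natCast_pow (n ν : ℕ) :
    gaussianAbsMoment (n : ℝ≥0)⁻¹ ^ ν = gaussianAbsMoment 1 ^ ν * (n : ℝ) ^ (-(ν : ℝ) / 2) := by
  have hsqrt : √((n : ℝ≥0)⁻¹ : ℝ≥0) = (n : ℝ) ^ (-(1 : ℝ) / 2) := by
    rw [NNReal.coe_inv, NNReal.coe_natCast, Real.sqrt_inv, Real.sqrt_eq_rpow,
      ← Real.rpow_neg n.cast_nonneg, neg_div]
  rw [gaussianAbsMoment_eq_sqrt_mul, hsqrt, mul_pow, mul_comm,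
    ← Real.rpow_mul_natCast n.cast_nonneg]
  congr 2
  ring

lemma integral_eval_of_natDegree_le_one {Ω : Type*} [MeasurableSpace Ω] {μ : Measure Ω}
    [IsProbabilityMeasure μ] {f : Ω → ℝ} (hf : Integrable f μ) {p : ℝ[X]} (hp : p.natDegree ≤ 1) :
    ∫ ω, p.eval (f ω) ∂μ = p.eval (∫ ω, f ω ∂μ) := by
  obtain ⟨a, b, rfl⟩ := Polynomial.exists_eq_X_add_C_of_natDegree_le_one hp
  simp only [Polynomial.eval_add, Polynomial.eval_mul, Polynomial.eval_C, Polynomial.eval_X]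
  rw [integral_add (hf.const_mul a) (integrable_const b), integral_const_mul, integral_const]
  simp

lemma condExpFn_eval {k : ℕ} (n : ℕ) (τ : Fin k → ℝ) (s : ℝ) {p : ℝ[X]}
    (hp : p.natDegree ≤ k + 1) :
    condExpFn n k τ s (fun z => p.eval z) =
      (∏ i, τ i) * gaussianAbsMoment (n : ℝ≥0)⁻¹ ^ k *
        (derivative^[k] p).eval (s * gaussianAbsMoment (n : ℝ≥0)⁻¹) := by
  have hdeg : (derivative^[k] p).natDegree ≤ 1 :=
    (Polynomial.natDegree_iterate_derivative p k).trans (by omega)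
  simp only [condExpFn, Gval, bExp_prod_bsign_mul_eval _ _ hp, weightMeasure]
  rw [integral_prod_mul (fun w : Fin k → ℝ => ∏ i, τ i * |w i|)
      (fun y : ℝ => (derivative^[k] p).eval (s * |y|)),
    integral_fintype_prod_eq_prod (fun i y => τ i * |y|),
    integral_eval_of_natDegree_le_one ((integrable_abs_gaussianReal _).const_mul s) hdeg]
  simp only [integral_const_mul, Finset.prod_mul_distrib, Finset.prod_const, Finset.card_univ,
    Fintype.card_fin, gaussianAbsMoment]

lemma condMoment_eq {k ν : ℕ} (hν : ν ≤ k + 1) (n : ℕ) (τ : Fin k → ℝ) (s : ℝ) :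
    condMoment n k τ s ν = (∏ i, τ i) * gaussianAbsMoment (n : ℝ≥0)⁻¹ ^ k *
      (ν.descFactorial k * (s * gaussianAbsMoment (n : ℝ≥0)⁻¹) ^ (ν - k)) := by
  have hdeg : (X ^ ν : ℝ[X]).natDegree ≤ k + 1 := (Polynomial.natDegree_X_pow_le ν).trans hν
  have h := condExpFn_eval n τ s hdeg
  simpa [condMoment, Polynomial.iterate_derivative_X_pow_eq_natCast_mul] using h

lemma condMoment_eq_zero_of_lt {k ν : ℕ} (hν : ν < k) (n : ℕ) (τ : Fin k → ℝ) (s : ℝ) :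
    condMoment n k τ s ν = 0 := by
  simp [condMoment_eq (hν.le.trans k.le_succ), Nat.descFactorial_of_lt hν]

lemma descFactorial_eq_factorial {k ν : ℕ} (hkν : k ≤ ν) (hν : ν ≤ k + 1) :
    ν.descFactorial k = ν ! := by
  rw [← Nat.factorial_mul_descFactorial hkν, Nat.factorial_eq_one.2 (by omega), one_mul]

lemma condMoment_div_factorial {k ν : ℕ} (hkν : k ≤ ν) (hν : ν ≤ k + 1) (n : ℕ) (τ : Fin k → ℝ)
    (s : ℝ) :
    condMoment n k τ s ν / ν ! = (∏ i, τ i) * s ^ (ν - k) *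
      (gaussianAbsMoment 1 ^ ν * (n : ℝ) ^ (-(ν : ℝ) / 2)) := by
  have hfac : (ν ! : ℝ) ≠ 0 := by positivity
  rw [condMoment_eq hν, descFactorial_eq_factorial hkν hν, ← gaussianAbsMoment_inv_natCast_pow,
    ← pow_mul_pow_sub _ hkν, mul_pow]
  field_simp

lemma IsSign.mul {a b : ℝ} (ha : IsSign a) (hb : IsSign b) : IsSign (a * b) := by
  rcases ha with rfl | rfl <;> rcases hb with rfl | rfl <;> simp [IsSign]

lemma IsSign.prod {ι : Type*} {t : Finset ι} {τ : ι → ℝ} (hτ : ∀ i ∈ t, IsSign (τ i)) :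
    IsSign (∏ i ∈ t, τ i) :=
  Finset.prod_induction τ IsSign (fun _ _ => IsSign.mul) (Or.inl rfl) hτ

lemma IsSign.pow {a : ℝ} (ha : IsSign a) (m : ℕ) : IsSign (a ^ m) := by
  simpa using IsSign.prod (t := Finset.range m) fun _ _ => ha

lemma IsSign.abs_eq_one {a : ℝ} (ha : IsSign a) : |a| = 1 := by
  rcases ha with rfl | rfl <;> simp

/-- The exponent in `{0, 1}` that writes a sign as a power of `-1`. -/
def signExponent (q : ℝ) : ℤ := if q = 1 then 0 else 1

lemma IsSign.neg_one_zpow_signExponent {q : ℝ} (hq : IsSign q) :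
    (-1 : ℝ) ^ signExponent q = q := by
  rcases hq with rfl | rfl <;> norm_num [signExponent]

lemma abs_condMoment_div_factorial_le {k ν n : ℕ} (hn : 1 ≤ n) (hν : ν ≤ k + 1) {τ : Fin k → ℝ}
    (hτ : ∀ i, IsSign (τ i)) {s : ℝ} (hs : IsSign s) :
    |condMoment n k τ s ν / ν !| ≤ gaussianAbsMoment 1 ^ ν * (n : ℝ) ^ (-(k : ℝ) / 2) := by
  have hmoment := gaussianAbsMoment_pos one_ne_zero
  rcases lt_or_ge ν k with hνk | hkν
  · rw [condMoment_eq_zero_of_lt hνk, zero_div, abs_zero]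
    positivity
  · rw [condMoment_div_factorial hkν hν, abs_mul,
      ((IsSign.prod fun i _ => hτ i).mul (hs.pow _)).abs_eq_one, one_mul,
      abs_of_nonneg (by positivity)]
    gcongr
    exact_mod_cast hn

end SignedMoments

section GaussianTransform

open Polynomial (X C derivative)
open scoped Polynomial Nat Topology

lemma abs_eval_le_mul_exp_sq (p : ℝ[X]) {ε : ℝ} (hε : 0 < ε) :
    ∃ K, ∀ x : ℝ, |p.eval x| ≤ K * Real.exp (ε * x ^ 2) := by
  have habs (x : ℝ) : |x| ≤ ε * x ^ 2 + 1 / (4 * ε) := by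
    have hsq : ε * x ^ 2 + 1 / (4 * ε) - |x| = ε * (|x| - 1 / (2 * ε)) ^ 2 := by
      rw [← sq_abs x]
      field_simp
      ring
    have : 0 ≤ ε * (|x| - 1 / (2 * ε)) ^ 2 := by positivity
    linarith
  have hpow (i : ℕ) (x : ℝ) :
      |x| ^ i ≤ i ! * Real.exp (1 / (4 * ε)) * Real.exp (ε * x ^ 2) := by
    have hexp := Real.pow_div_factorial_le_exp |x| (abs_nonneg x) i
    rw [div_le_iff₀' (by positivity)] at hexp
    refine hexp.trans ?_
    rw [mul_assoc, ← Real.exp_add, add_comm]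
    gcongr
    exact habs x
  refine ⟨∑ i ∈ Finset.range (p.natDegree + 1), |p.coeff i| * (i ! * Real.exp (1 / (4 * ε))),
    fun x => ?_⟩
  rw [Polynomial.eval_eq_sum_range, Finset.sum_mul]
  refine (Finset.abs_sum_le_sum_abs _ _).trans (Finset.sum_le_sum fun i _ => ?_)
  rw [abs_mul, abs_pow, mul_assoc]
  gcongr
  exact hpow i x

/-- `σ` is integrable against every centred Gaussian weight `exp (-b u²)`, so that all its
Gaussian smoothings exist. -/
def GaussianIntegrable (σ : ℝ → ℝ) : Prop :=
  ∀ b : ℝ, 0 < b → Integrable fun u => σ u * Real.exp (-b * u ^ 2)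

namespace GaussianIntegrable

variable {σ : ℝ → ℝ}

lemma aestronglyMeasurable (hσ : GaussianIntegrable σ) : AEStronglyMeasurable σ := by
  have hcancel : σ = fun u => σ u * Real.exp (-1 * u ^ 2) * Real.exp (u ^ 2) := by
    funext u
    rw [mul_assoc, ← Real.exp_add]
    simp
  rw [hcancel]
  exact (hσ 1 one_pos).aestronglyMeasurable.mul (by fun_prop)

lemma mono (hσ : GaussianIntegrable σ) {f : ℝ → ℝ} (hf : AEStronglyMeasurable f)
    (hle : ∀ u, |f u| ≤ |σ u|) : GaussianIntegrable f := fun b hb =>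
  (hσ b hb).mono (hf.mul (by fun_prop)) (Eventually.of_forall fun u => by
    simpa only [norm_mul, Real.norm_eq_abs] using
      mul_le_mul_of_nonneg_right (hle u) (abs_nonneg _))

lemma mul_eval (hσ : GaussianIntegrable σ) (p : ℝ[X]) :
    GaussianIntegrable fun u => σ u * p.eval u := by
  intro b hb
  obtain ⟨K, hK⟩ := abs_eval_le_mul_exp_sq p (half_pos hb)
  refine ((hσ (b / 2) (half_pos hb)).norm.const_mul K).mono'
    ((hσ.aestronglyMeasurable.mul (by fun_prop)).mul (by fun_prop))
    (Eventually.of_forall fun u => ?_)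
  have hexp : Real.exp (b / 2 * u ^ 2) * Real.exp (-b * u ^ 2) = Real.exp (-(b / 2) * u ^ 2) := by
    rw [← Real.exp_add]
    ring_nf
  simp only [norm_mul, Real.norm_eq_abs, Real.abs_exp]
  calc |σ u| * |p.eval u| * Real.exp (-b * u ^ 2)
      ≤ |σ u| * (K * Real.exp (b / 2 * u ^ 2)) * Real.exp (-b * u ^ 2) := by
        gcongr
        exact hK u
    _ = K * (|σ u| * Real.exp (-(b / 2) * u ^ 2)) := by rw [← hexp]; ring

lemma one : GaussianIntegrable fun _ => 1 := fun b hb => by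
  simpa only [one_mul] using integrable_exp_neg_mul_sq hb

end GaussianIntegrable

lemma PolyBounded.gaussianIntegrable {σ : ℝ → ℝ} (hm : Measurable σ) (hσ : PolyBounded σ) :
    GaussianIntegrable σ := by
  obtain ⟨K, hK, c, -, hbound⟩ := hσ
  refine (GaussianIntegrable.one.mul_eval (C K * X ^ (2 * c) + C (2 * K))).mono
    hm.aestronglyMeasurable fun u => (hbound u).trans ?_
  have hpow : |u| ^ c ≤ u ^ (2 * c) + 1 := by
    rw [pow_mul, ← sq_abs u, ← pow_mul, mul_comm 2 c, pow_mul]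
    nlinarith [sq_nonneg (|u| ^ c - 1), pow_nonneg (abs_nonneg u) c]
  refine le_trans ?_ (le_abs_self _)
  simp only [Polynomial.eval_add, Polynomial.eval_mul, Polynomial.eval_C, Polynomial.eval_pow,
    Polynomial.eval_X, one_mul]
  linarith [mul_le_mul_of_nonneg_left hpow hK.le]

/-- The kernel `p(z) exp(-z²/2)`, a family closed under differentiation in `z` that contains the
unnormalized Gaussian density as `p = 1`. -/
def gaussianKernel (p : ℝ[X]) (z : ℝ) : ℝ := p.eval z * Real.exp (-z ^ 2 / 2)

/-- The operator on polynomials induced by differentiating `p(z) exp(-z²/2)` in `z`; up to sign,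
its iterates at `1` are the Hermite polynomials. -/
def kernelDerivative (p : ℝ[X]) : ℝ[X] := derivative p - X * p

lemma hasDerivAt_gaussianKernel (p : ℝ[X]) (z : ℝ) :
    HasDerivAt (gaussianKernel p) (gaussianKernel (kernelDerivative p) z) z := by
  have hsq : HasDerivAt (fun z : ℝ => -z ^ 2 / 2) (-z) z :=
    ((hasDerivAt_pow 2 z).neg.div_const 2).congr_deriv (by push_cast; ring)
  refine ((p.hasDerivAt z).mul hsq.exp).congr_deriv ?_
  simp only [gaussianKernel, kernelDerivative, Polynomial.eval_sub, Polynomial.eval_mul,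
    Polynomial.eval_X]
  ring

@[fun_prop]
lemma continuous_gaussianKernel (p : ℝ[X]) : Continuous (gaussianKernel p) := by
  unfold gaussianKernel
  fun_prop

-- Half of the Gaussian decay absorbs the polynomial, and `(a u + c)² ≥ a² u² / 2 - c²`
-- leaves a weight in `u` that is uniform for `a` bounded below and `c` bounded.
lemma abs_gaussianKernel_affine_le (p : ℝ[X]) {δ : ℝ} (hδ : 0 < δ) (R : ℝ) :
    ∃ K, ∀ a c u : ℝ, δ ≤ a → |c| ≤ R →
      |gaussianKernel p (a * u + c)| ≤ K * Real.exp (-(δ ^ 2 / 8) * u ^ 2) := by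
  obtain ⟨K, hK⟩ := abs_eval_le_mul_exp_sq p (show (0 : ℝ) < 1 / 4 by norm_num)
  have hK0 : 0 ≤ K := by simpa using (abs_nonneg _).trans (hK 0)
  refine ⟨K * Real.exp (R ^ 2 / 4), fun a c u ha hc => ?_⟩
  set z := a * u + c
  have hexponent : -z ^ 2 / 4 ≤ R ^ 2 / 4 + -(δ ^ 2 / 8) * u ^ 2 := by
    have hau : δ ^ 2 * u ^ 2 ≤ a ^ 2 * u ^ 2 := by gcongr
    have hcR : c ^ 2 ≤ R ^ 2 := sq_le_sq.2 (hc.trans (le_abs_self R))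
    nlinarith [sq_nonneg (a * u + 2 * c)]
  calc |gaussianKernel p z|
      = |p.eval z| * Real.exp (-z ^ 2 / 2) := by rw [gaussianKernel, abs_mul, Real.abs_exp]
    _ ≤ K * Real.exp (1 / 4 * z ^ 2) * Real.exp (-z ^ 2 / 2) := by gcongr; exact hK z
    _ = K * Real.exp (-z ^ 2 / 4) := by rw [mul_assoc, ← Real.exp_add]; ring_nf
    _ ≤ K * Real.exp (R ^ 2 / 4 + -(δ ^ 2 / 8) * u ^ 2) := by gcongr
    _ = K * Real.exp (R ^ 2 / 4) * Real.exp (-(δ ^ 2 / 8) * u ^ 2) := by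
      rw [Real.exp_add, mul_assoc]

/-- The integral of `σ` against the kernel `p(z) exp(-z²/2)` at `z = a u + c`. The smoothing
`Σ_v(t)` and all its derivatives are of this form, with `a = 1/√v` and `c = -t/√v`. -/
def gaussianTransform (σ : ℝ → ℝ) (p : ℝ[X]) (a c : ℝ) : ℝ :=
  ∫ u, σ u * gaussianKernel p (a * u + c)

variable {σ : ℝ → ℝ}

lemma GaussianIntegrable.integrable_mul_gaussianKernel (hσ : GaussianIntegrable σ) (p : ℝ[X])
    {a : ℝ} (ha : 0 < a) (c : ℝ) : Integrable fun u => σ u * gaussianKernel p (a * u + c) := by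
  obtain ⟨K, hK⟩ := abs_gaussianKernel_affine_le p ha |c|
  refine ((hσ _ (by positivity : 0 < a ^ 2 / 8)).norm.const_mul K).mono'
    (hσ.aestronglyMeasurable.mul (by fun_prop)) (Eventually.of_forall fun u => ?_)
  simp only [norm_mul, Real.norm_eq_abs, Real.abs_exp]
  calc |σ u| * |gaussianKernel p (a * u + c)|
      ≤ |σ u| * (K * Real.exp (-(a ^ 2 / 8) * u ^ 2)) := by gcongr; exact hK a c u le_rfl le_rfl
    _ = K * (|σ u| * Real.exp (-(a ^ 2 / 8) * u ^ 2)) := by ring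

lemma GaussianIntegrable.hasDerivAt_gaussianTransform_line (hσ : GaussianIntegrable σ) (p : ℝ[X])
    (a₀ a₁ c₁ : ℝ) {r : ℝ} (hr : 0 < a₀ + a₁ * r) :
    HasDerivAt (fun r => gaussianTransform σ p (a₀ + a₁ * r) (c₁ * r))
      (gaussianTransform (fun u => σ u * (C a₁ * X + C c₁).eval u) (kernelDerivative p)
        (a₀ + a₁ * r) (c₁ * r)) r := by
  set δ := (a₀ + a₁ * r) / 2
  set R := |c₁ * r| + 1
  set s := {r' | δ < a₀ + a₁ * r' ∧ |c₁ * r'| < R}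
  have hδ_pos : 0 < δ := half_pos hr
  have hσ' := hσ.mul_eval (C a₁ * X + C c₁)
  obtain ⟨K, hK⟩ := abs_gaussianKernel_affine_le (kernelDerivative p) hδ_pos R
  have hs : s ∈ 𝓝 r := by
    refine IsOpen.mem_nhds (.and ?_ ?_) ⟨half_lt_self hr, lt_add_one _⟩
    · exact isOpen_lt (by fun_prop) (by fun_prop)
    · exact isOpen_lt (by fun_prop) (by fun_prop)
  refine (hasDerivAt_integral_of_dominated_loc_of_deriv_le (μ := volume) (s := s)
    (F := fun r u => σ u * gaussianKernel p ((a₀ + a₁ * r) * u + c₁ * r))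
    (F' := fun r u => σ u * (C a₁ * X + C c₁).eval u *
      gaussianKernel (kernelDerivative p) ((a₀ + a₁ * r) * u + c₁ * r))
    (bound := fun u => K * ‖σ u * (C a₁ * X + C c₁).eval u * Real.exp (-(δ ^ 2 / 8) * u ^ 2)‖) hs
    (Eventually.of_forall fun r' => hσ.aestronglyMeasurable.mul (by fun_prop))
    (hσ.integrable_mul_gaussianKernel p hr _)
    (hσ'.integrable_mul_gaussianKernel _ hr _).aestronglyMeasurable
    (Eventually.of_forall fun u r' hr' => ?_)
    ((hσ' _ (by positivity)).norm.const_mul K)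
    (Eventually.of_forall fun u r' _ => ?_)).2
  · rw [norm_mul, norm_mul _ (Real.exp _), Real.norm_eq_abs (gaussianKernel _ _),
      Real.norm_eq_abs (Real.exp _), Real.abs_exp, mul_left_comm]
    gcongr
    exact hK _ _ u hr'.1.le hr'.2.le
  · have hline : HasDerivAt (fun r => (a₀ + a₁ * r) * u + c₁ * r) (a₁ * u + c₁) r' := by
      simpa using ((((hasDerivAt_id r').const_mul a₁).const_add a₀).mul_const u).fun_add
        ((hasDerivAt_id r').const_mul c₁)
    refine (((hasDerivAt_gaussianKernel p _).comp r' hline).const_mul (σ u)).congr_deriv ?_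
    simp only [Polynomial.eval_add, Polynomial.eval_mul, Polynomial.eval_C, Polynomial.eval_X]
    ring

lemma GaussianIntegrable.iteratedDeriv_gaussianTransform (hσ : GaussianIntegrable σ) (p : ℝ[X])
    {a : ℝ} (ha : 0 < a) (b : ℝ) (ν : ℕ) :
    iteratedDeriv ν (fun t => gaussianTransform σ p a (b * t)) =
      fun t => b ^ ν * gaussianTransform σ (kernelDerivative^[ν] p) a (b * t) := by
  induction ν with
  | zero => simp
  | succ ν ih =>
    funext t
    have hline := hσ.hasDerivAt_gaussianTransform_line (kernelDerivative^[ν] p) a 0 b (r := t)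
      (by simpa using ha)
    have hderiv : HasDerivAt (fun t => gaussianTransform σ (kernelDerivative^[ν] p) a (b * t))
        (b * gaussianTransform σ (kernelDerivative^[ν + 1] p) a (b * t)) t := by
      refine HasDerivAt.congr_deriv (by simpa using hline) ?_
      simp only [gaussianTransform, Function.iterate_succ_apply', ← integral_const_mul]
      refine integral_congr_ae (Eventually.of_forall fun u => ?_)
      ring
    rw [iteratedDeriv_succ, ih, (hderiv.const_mul _).deriv, pow_succ, mul_assoc]

lemma gsmooth_eq_gaussianTransform (σ : ℝ → ℝ) {v : ℝ} (hv : 0 < v) (t : ℝ) :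
    gsmooth σ v t = (√(2 * Real.pi * v))⁻¹ * gaussianTransform σ 1 (√v)⁻¹ (-(√v)⁻¹ * t) := by
  rw [gsmooth, gaussianTransform, integral_gaussianReal_eq_integral_smul (by simpa using hv),
    ← integral_const_mul, ← integral_sub_right_eq_self _ t]
  refine integral_congr_ae (Eventually.of_forall fun u => ?_)
  have hexponent : -(u - t - 0) ^ 2 / (2 * v) = -((√v)⁻¹ * u + -(√v)⁻¹ * t) ^ 2 / 2 := by
    have hsq : ((√v)⁻¹) ^ 2 = v⁻¹ := by rw [inv_pow, Real.sq_sqrt hv.le]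
    linear_combination (u - t) ^ 2 / 2 * hsq
  beta_reduce
  rw [gaussianPDFReal, Real.coe_toNNReal _ hv.le, hexponent, sub_add_cancel, gaussianKernel,
    Polynomial.eval_one, smul_eq_mul]
  ring

lemma GaussianIntegrable.iteratedDeriv_gsmooth (hσ : GaussianIntegrable σ) {v : ℝ} (hv : 0 < v)
    (ν : ℕ) (t : ℝ) :
    iteratedDeriv ν (gsmooth σ v) t = (√(2 * Real.pi * v))⁻¹ * ((-(√v)⁻¹) ^ ν *
      gaussianTransform σ (kernelDerivative^[ν] 1) (√v)⁻¹ (-(√v)⁻¹ * t)) := by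
  rw [funext (gsmooth_eq_gaussianTransform σ hv), iteratedDeriv_const_mul_field,
    hσ.iteratedDeriv_gaussianTransform 1 (by positivity)]

lemma GaussianIntegrable.differentiableAt_iteratedDeriv_gsmooth (hσ : GaussianIntegrable σ)
    {v : ℝ} (hv : 0 < v) (ν : ℕ) (t : ℝ) :
    DifferentiableAt ℝ (fun v => iteratedDeriv ν (gsmooth σ v) t) v := by
  have hinv : DifferentiableAt ℝ (fun v : ℝ => (√v)⁻¹) v :=
    (differentiableAt_id.sqrt hv.ne').inv (by positivity)
  have hnormalizer : DifferentiableAt ℝ (fun v : ℝ => (√(2 * Real.pi * v))⁻¹) v :=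
    ((differentiableAt_id.const_mul _).sqrt (by positivity)).inv (by positivity)
  have htransform : DifferentiableAt ℝ (fun a =>
      gaussianTransform σ (kernelDerivative^[ν] 1) a (-a * t)) (√v)⁻¹ := by
    have hline := hσ.hasDerivAt_gaussianTransform_line (kernelDerivative^[ν] 1) 0 1 (-t)
      (r := (√v)⁻¹) (by simpa using hv)
    simpa [mul_comm] using hline.differentiableAt
  refine (hnormalizer.mul ((hinv.neg.pow ν).mul (htransform.comp v hinv))).congr_of_eventuallyEq ?_
  filter_upwards [Ioi_mem_nhds hv] with v' hv'
  exact hσ.iteratedDeriv_gsmooth hv' ν t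

end GaussianTransform

section DominantTerm

open scoped Nat

variable {k P : ℕ}

lemma GaussianIntegrable.isBigO_iteratedDeriv_gsmooth_sub {σ : ℝ → ℝ} (hσ : GaussianIntegrable σ)
    (κ : ℝ) (ν : ℕ) (t : ℝ) :
    (fun n : ℕ => iteratedDeriv ν (gsmooth σ (1 - κ / n)) t - iteratedDeriv ν (gsmooth σ 1) t)
      =O[atTop] fun n : ℕ => (n : ℝ)⁻¹ := by
  have hvariance : Tendsto (fun n : ℕ => 1 - κ / n) atTop (nhds 1) := by
    simpa using (tendsto_const_div_atTop_nhds_zero_nat κ).const_sub 1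
  have hdiff := (hσ.differentiableAt_iteratedDeriv_gsmooth one_pos ν t).isBigO_sub
  refine (hdiff.comp_tendsto hvariance).trans ?_
  refine (isBigO_const_mul_self (-κ) (fun n : ℕ => (n : ℝ)⁻¹) atTop).congr_left fun n => ?_
  simp only [Function.comp_apply]
  ring

lemma sum_mul_condMoment_eq_last (hkP : k ≤ P) (hPk : P ≤ k + 1) {D : ℕ → ℝ}
    (hD : ∀ Q, k ≤ Q → Q < P → D Q = 0) (n : ℕ) (τ : Fin k → ℝ) (s : ℝ) :
    ∑ ν ∈ range (P + 1), D ν / ν ! * condMoment n k τ s ν =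
      D P * gaussianAbsMoment 1 ^ P * ((∏ i, τ i) * s ^ (P - k)) * (n : ℝ) ^ (-(P : ℝ) / 2) := by
  have hlower : ∀ ν ∈ range P, D ν / ν ! * condMoment n k τ s ν = 0 := fun ν hν => by
    rcases lt_or_ge ν k with hνk | hkν
    · rw [condMoment_eq_zero_of_lt hνk, mul_zero]
    · rw [hD ν hkν (mem_range.1 hν), zero_div, zero_mul]
  rw [sum_range_succ, sum_eq_zero hlower, zero_add, div_mul_eq_mul_div, mul_div_assoc,
    condMoment_div_factorial hkP hPk]
  ring

lemma abs_sum_mul_condMoment_le (hPk : P ≤ k + 1) (D : ℕ → ℝ) {n : ℕ} (hn : 1 ≤ n)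
    {τ : Fin k → ℝ} (hτ : ∀ i, IsSign (τ i)) {s : ℝ} (hs : IsSign s) :
    |∑ ν ∈ range (P + 1), D ν / ν ! * condMoment n k τ s ν| ≤
      (∑ ν ∈ range (P + 1), gaussianAbsMoment 1 ^ ν * |D ν|) * (n : ℝ) ^ (-(k : ℝ) / 2) := by
  rw [sum_mul]
  refine (abs_sum_le_sum_abs _ _).trans (sum_le_sum fun ν hν => ?_)
  have hνk : ν ≤ k + 1 := (Nat.lt_succ_iff.1 (mem_range.1 hν)).trans hPk
  rw [div_mul_eq_mul_div, mul_div_assoc, abs_mul, mul_comm _ |D ν|, mul_assoc]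
  gcongr
  exact abs_condMoment_div_factorial_le hn hνk hτ hs

lemma inv_mul_rpow_neg_half_le (hPk : P ≤ k + 1) {x : ℝ} (hx : 1 ≤ x) :
    x⁻¹ * x ^ (-(k : ℝ) / 2) ≤ x ^ (-(P : ℝ) / 2 - 1 / 2) := by
  have hPk' : (P : ℝ) ≤ k + 1 := by exact_mod_cast hPk
  rw [← Real.rpow_neg_one, ← Real.rpow_add (by positivity)]
  exact Real.rpow_le_rpow_of_exponent_le hx (by linarith)

lemma Expressive.le_succ_of_iteratedDeriv_eq_zero {σ : ℝ → ℝ} (hσ : Expressive σ)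
    (hfirst : ∀ Q, k ≤ Q → Q < P → iteratedDeriv Q (gsmooth σ 1) 0 = 0) : P ≤ k + 1 := by
  by_contra! hP
  exact (hσ.2.2 k).elim (· (hfirst k le_rfl (by omega)))
    (· (hfirst (k + 1) k.le_succ hP))

theorem taylor_dominant_term_general {σ : ℝ → ℝ} (hσ : GaussianIntegrable σ)
    (hkP : k ≤ P) (hPk : P ≤ k + 1) (hP : iteratedDeriv P (gsmooth σ 1) 0 ≠ 0)
    (hfirst : ∀ Q : ℕ, k ≤ Q → Q < P → iteratedDeriv Q (gsmooth σ 1) 0 = 0) :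
    ∃ C : ℝ, C ≠ 0 ∧ ∃ C' : (Fin k → ℝ) → ℝ → ℤ, ∃ C₀ : ℝ, 0 < C₀ ∧ ∃ n₀ : ℕ,
      ∀ n : ℕ, n₀ ≤ n →
        ∀ τ : Fin k → ℝ, (∀ i, IsSign (τ i)) → ∀ s : ℝ, IsSign s →
          |(∑ ν ∈ Finset.range (P + 1),
                iteratedDeriv ν (gsmooth σ (1 - (k : ℝ) / n)) 0 / (ν.factorial : ℝ) *
                  condMoment n k τ s ν) -
              C * (-1 : ℝ) ^ (C' τ s) * (n : ℝ) ^ (-(P : ℝ) / 2)| ≤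
            C₀ * (n : ℝ) ^ (-(P : ℝ) / 2 - 1 / 2) := by
  set D : ℕ → ℝ := fun ν => iteratedDeriv ν (gsmooth σ 1) 0
  set E : ℕ → ℕ → ℝ := fun n ν => iteratedDeriv ν (gsmooth σ (1 - (k : ℝ) / n)) 0 - D ν
  have herror : (fun n => ∑ ν ∈ range (P + 1), gaussianAbsMoment 1 ^ ν * |E n ν|)
      =O[atTop] fun n : ℕ => (n : ℝ)⁻¹ :=
    IsBigO.fun_sum fun ν _ => (hσ.isBigO_iteratedDeriv_gsmooth_sub k ν 0).abs_left.const_mul_left _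
  obtain ⟨C₀, hC₀, hbound⟩ := herror.exists_pos
  obtain ⟨n₀, hn₀⟩ := eventually_atTop.1 (hbound.bound.and (eventually_ge_atTop 1))
  refine ⟨D P * gaussianAbsMoment 1 ^ P,
    mul_ne_zero hP (pow_ne_zero _ (gaussianAbsMoment_pos one_ne_zero).ne'),
    fun τ s => signExponent ((∏ i, τ i) * s ^ (P - k)), C₀, hC₀, n₀, fun n hn τ hτ s hs => ?_⟩
  obtain ⟨herror_le, hn_pos⟩ := hn₀ n hn
  have hsign : IsSign ((∏ i, τ i) * s ^ (P - k)) := (IsSign.prod fun i _ => hτ i).mul (hs.pow _)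
  rw [hsign.neg_one_zpow_signExponent, ← sum_mul_condMoment_eq_last hkP hPk hfirst,
    ← sum_sub_distrib, sum_congr rfl fun ν _ => by rw [← sub_mul, ← sub_div]]
  calc |∑ ν ∈ range (P + 1), E n ν / ν ! * condMoment n k τ s ν|
      ≤ (∑ ν ∈ range (P + 1), gaussianAbsMoment 1 ^ ν * |E n ν|) * (n : ℝ) ^ (-(k : ℝ) / 2) :=
        abs_sum_mul_condMoment_le hPk (E n) hn_pos hτ hs
    _ ≤ C₀ * (n : ℝ)⁻¹ * (n : ℝ) ^ (-(k : ℝ) / 2) := by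
        gcongr
        simpa using (Real.le_norm_self _).trans herror_le
    _ ≤ C₀ * (n : ℝ) ^ (-(P : ℝ) / 2 - 1 / 2) := by
        rw [mul_assoc]
        gcongr
        exact inv_mul_rpow_neg_half_le hPk (by exact_mod_cast hn_pos)

end DominantTerm

/-- Dominant term of the Taylor part: for expressive `σ`, with `P` the first
index `≥ k` where `Σ^{(P)}(0) ≠ 0`, `Σ_n := Σ_{1-k/n}` and `a_{ν,n} := Σ_n^{(ν)}(0)/ν!`,
conditionally on any fixed signs,
`Σ_{ν=0}^P a_{ν,n} E[M_k(x) G^ν] = C(P) (−1)^{C'(τ,sign b)} n^{-P/2} + O(n^{-P/2-1/2})`,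
uniformly over the signs. -/
theorem taylor_dominant_term
    (σ : ℝ → ℝ) (hσ : Expressive σ) (k P : ℕ) (hkP : k ≤ P)
    (hP : iteratedDeriv P (gsmooth σ 1) 0 ≠ 0)
    (hfirst : ∀ Q : ℕ, k ≤ Q → Q < P → iteratedDeriv Q (gsmooth σ 1) 0 = 0) :
    ∃ C : ℝ, C ≠ 0 ∧ ∃ C' : (Fin k → ℝ) → ℝ → ℤ, ∃ C₀ : ℝ, 0 < C₀ ∧ ∃ n₀ : ℕ,
      ∀ n : ℕ, n₀ ≤ n →
        ∀ τ : Fin k → ℝ, (∀ i, IsSign (τ i)) → ∀ s : ℝ, IsSign s →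
          |(∑ ν ∈ Finset.range (P + 1),
                iteratedDeriv ν (gsmooth σ (1 - (k : ℝ) / n)) 0 / (ν.factorial : ℝ) *
                  condMoment n k τ s ν) -
              C * (-1 : ℝ) ^ (C' τ s) * (n : ℝ) ^ (-(P : ℝ) / 2)| ≤
            C₀ * (n : ℝ) ^ (-(P : ℝ) / 2 - 1 / 2) :=
  taylor_dominant_term_general (hσ.2.1.gaussianIntegrable hσ.1) hkP
    (hσ.le_succ_of_iteratedDeriv_eq_zero hfirst) hP hfirst
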